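/- Let d = 2 and 1 ≤ r < 2. Then for no exponents 1 ≤ p ≤ ∞ and 1 ≤ q ≤ ∞ is the operator V_r^I A bounded from L^p(ℝ²) to L^q(ℝ²). -/

import Mathlib

open MeasureTheory Metric Set
open scoped ENNReal NNReal FourierTransform

noncomputable section

/-- Euclidean `d`-space. -/
abbrev Euc (d : ℕ) : Type := EuclideanSpace ℝ (Fin d)

/-- The normalized surface measure `σ` on the unit sphere `S^{d-1} ⊆ ℝ^d`. -/
def sphereMeasure (d : ℕ) : Measure (Euc d) :=
  (((volume : Measure (Euc d)).toSphere Set.univ)⁻¹ : ℝ≥0∞) •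
    ((volume : Measure (Euc d)).toSphere.map Subtype.val)

/-- The spherical average `A_t f(x) = ∫_{S^{d-1}} f(x - t y) dσ(y)`. -/
def sphAvg {d : ℕ} (f : Euc d → ℂ) (t : ℝ) (x : Euc d) : ℂ :=
  ∫ y, f (x - t • y) ∂(sphereMeasure d)

/-- The `r`-variation of the family `t ↦ a t` over the set `E ⊆ ℝ`. -/
def rVar (r : ℝ) (E : Set ℝ) (a : ℝ → ℂ) : ℝ≥0∞ :=
  ⨆ (N : ℕ) (t : Fin (N + 1) → ℝ) (_ : StrictMono t) (_ : ∀ i, t i ∈ E),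
    (∑ i : Fin N, (‖a (t i.succ) - a (t i.castSucc)‖₊ : ℝ≥0∞) ^ r) ^ (1 / r)

/-- The global variation operator `V_r A` for the spherical means. -/
def VrA {d : ℕ} (r : ℝ) (f : Euc d → ℂ) (x : Euc d) : ℝ≥0∞ :=
  rVar r (Set.Ioi 0) (fun t => sphAvg f t x)

/-- The local variation operator `V_r^I A`, `I = [1,2]`. -/
def VrIA {d : ℕ} (r : ℝ) (f : Euc d → ℂ) (x : Euc d) : ℝ≥0∞ :=
  rVar r (Set.Icc 1 2) (fun t => sphAvg f t x)

/-- `L^q` norm (with respect to `μ`) of an `ℝ≥0∞`-valued function, `1 ≤ q ≤ ∞`. -/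
def lqNorm {α : Type*} [MeasurableSpace α] (q : ℝ≥0∞) (g : α → ℝ≥0∞)
    (μ : Measure α) : ℝ≥0∞ :=
  if q = ∞ then essSup g μ else (∫⁻ x, g x ^ q.toReal ∂μ) ^ (1 / q.toReal)

/-- Boundedness `L^p → L^q` of an `ℝ≥0∞`-valued operator (exponents in `ℝ≥0∞`). -/
def IsBddLpLq (d : ℕ) (p q : ℝ≥0∞) (T : (Euc d → ℂ) → Euc d → ℝ≥0∞) : Prop :=
  ∃ C : ℝ≥0, ∀ f : Euc d → ℂ, MemLp f p volume →
    lqNorm q (T f) volume ≤ C * eLpNorm f p volume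


open scoped Pointwise in
lemma aux_T (s : Set (Euc 2)) :
    Ioo (0:ℝ) 1 • ((↑) '' ((Subtype.val : sphere (0 : Euc 2) 1 → Euc 2) ⁻¹' s) : Set (Euc 2)) =
      {x : Euc 2 | 0 < ‖x‖ ∧ ‖x‖ < 1 ∧ ‖x‖⁻¹ • x ∈ s} := by
  ext x
  simp only [Set.mem_smul, Set.mem_image, Set.mem_preimage, Set.mem_ofPred_eq, Set.mem_Ioo]
  constructor
  · rintro ⟨r, ⟨h0, h1⟩, y, ⟨⟨z, hz⟩, hzs, rfl⟩, rfl⟩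
    have hz' : ‖z‖ = 1 := by simpa using hz
    have : ‖r • z‖ = r := by rw [norm_smul, hz', Real.norm_of_nonneg h0.le, mul_one]
    rw [this, smul_smul, inv_mul_cancel₀ h0.ne', one_smul]
    exact ⟨h0, h1, hzs⟩
  · rintro ⟨h0, h1, h2⟩
    refine ⟨‖x‖, ⟨h0, h1⟩, ‖x‖⁻¹ • x, ⟨⟨‖x‖⁻¹ • x, ?_⟩, h2, rfl⟩, ?_⟩
    · simp [norm_smul, h0.ne']
    · rw [smul_smul, mul_inv_cancel₀ h0.ne', one_smul]

lemma gamma_cont : Continuous (fun θ : ℝ => (!₂[Real.cos θ, Real.sin θ] : Euc 2)) := by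
  refine (PiLp.continuous_toLp 2 _).comp ?_
  refine continuous_pi fun i => ?_
  fin_cases i <;> simp <;> fun_prop

lemma e_mp : MeasurePreserving (fun p : ℝ × ℝ => (!₂[p.1, p.2] : Euc 2)) volume volume :=
  (PiLp.volume_preserving_toLp (Fin 2)).comp (volume_preserving_finTwoArrow ℝ).symm

lemma half_int : ∫⁻ r in Ioi (0:ℝ), ENNReal.ofReal r * (Iio (1:ℝ)).indicator 1 r = 2⁻¹ := by
  have h1 : ∀ r : ℝ, ENNReal.ofReal r * (Iio (1:ℝ)).indicator 1 r
      = (Iio (1:ℝ)).indicator (fun r => ENNReal.ofReal r) r := by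
    intro r
    by_cases h : r ∈ Iio (1:ℝ) <;> simp [h]
  simp_rw [h1]
  rw [lintegral_indicator measurableSet_Iio, Measure.restrict_restrict measurableSet_Iio,
    Set.inter_comm, Ioi_inter_Iio, ← ofReal_integral_eq_lintegral_ofReal]
  · rw [← integral_Ioc_eq_integral_Ioo, ← intervalIntegral.integral_of_le zero_le_one, integral_id]
    norm_num
    rw [one_div, ENNReal.ofReal_inv_of_pos (by norm_num)]; simp
  · exact (continuous_id.integrableOn_Icc (a := (0:ℝ)) (b := 1)).mono_set Ioo_subset_Icc_self
  · filter_upwards [ae_restrict_mem measurableSet_Ioo] with x hx using hx.1.le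

lemma map_toSphere :
    (volume : Measure (Euc 2)).toSphere.map Subtype.val =
      (volume.restrict (Ioo (-Real.pi) Real.pi)).map
        (fun θ : ℝ => (!₂[Real.cos θ, Real.sin θ] : Euc 2)) := by
  ext s hs
  have hg := gamma_cont.measurable
  rw [Measure.map_apply measurable_subtype_coe hs, Measure.map_apply hg hs,
    Measure.toSphere_apply' _ (measurable_subtype_coe hs), aux_T]
  set T := {x : Euc 2 | 0 < ‖x‖ ∧ ‖x‖ < 1 ∧ ‖x‖⁻¹ • x ∈ s} with hT
  have hTm : MeasurableSet T := by
    refine (measurableSet_lt measurable_const measurable_norm).inter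
      ((measurableSet_lt measurable_norm measurable_const).inter ?_)
    exact (measurable_norm.inv.smul measurable_id) hs
  rw [← e_mp.measure_preimage hTm.nullMeasurableSet,
    ← lintegral_indicator_one (e_mp.measurable hTm), ← lintegral_comp_polarCoord_symm]
  have key : ∫⁻ p in polarCoord.target, ENNReal.ofReal p.1 •
      ((fun p : ℝ × ℝ => (!₂[p.1, p.2] : Euc 2)) ⁻¹' T).indicator (1 : ℝ × ℝ → ℝ≥0∞) (polarCoord.symm p)
      = ∫⁻ p in polarCoord.target, (ENNReal.ofReal p.1 * (Iio (1:ℝ)).indicator 1 p.1) *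
        ((fun θ : ℝ => (!₂[Real.cos θ, Real.sin θ] : Euc 2)) ⁻¹' s).indicator 1 p.2 := by
    refine setLIntegral_congr_fun polarCoord.open_target.measurableSet ?_
    rintro ⟨r, θ⟩ hp
    simp only [polarCoord_target, Set.mem_prod, Set.mem_Ioi] at hp
    have hr := hp.1
    have hpt : (!₂[r * Real.cos θ, r * Real.sin θ] : Euc 2) = r • !₂[Real.cos θ, Real.sin θ] := by
      ext i; fin_cases i <;> simp
    have hn1 : ‖(!₂[Real.cos θ, Real.sin θ] : Euc 2)‖ = 1 := by
      simp [EuclideanSpace.norm_eq]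
    have hmem : (polarCoord.symm (r, θ)) ∈ ((fun p : ℝ × ℝ => (!₂[p.1, p.2] : Euc 2)) ⁻¹' T) ↔
        r < 1 ∧ (!₂[Real.cos θ, Real.sin θ] : Euc 2) ∈ s := by
      simp only [polarCoord_symm_apply, Set.mem_preimage, hT, Set.mem_ofPred_eq, hpt, norm_smul, hn1,
        Real.norm_of_nonneg hr.le, mul_one, smul_smul, inv_mul_cancel₀ hr.ne', one_smul, hr, true_and]
    by_cases h1 : r < 1 <;> by_cases h2 : (!₂[Real.cos θ, Real.sin θ] : Euc 2) ∈ s <;>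
      simp [hmem, h1, h2, -polarCoord_symm_apply]
  rw [key, polarCoord_target, Measure.volume_eq_prod, ← Measure.prod_restrict]
  have hm1 : Measurable fun r : ℝ => ENNReal.ofReal r * (Iio (1:ℝ)).indicator 1 r :=
    ENNReal.measurable_ofReal.mul (measurable_one.indicator measurableSet_Iio)
  have hm2 : Measurable (((fun θ : ℝ => (!₂[Real.cos θ, Real.sin θ] : Euc 2)) ⁻¹' s).indicator
      (1 : ℝ → ℝ≥0∞)) := measurable_one.indicator (hg hs)
  rw [lintegral_prod_mul hm1.aemeasurable hm2.aemeasurable, half_int,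
    lintegral_indicator_one (hg hs), ← mul_assoc]
  simp [ENNReal.mul_inv_cancel]

lemma int_sphere : ∃ c : ℝ, 0 < c ∧ ∀ F : Euc 2 → ℂ, StronglyMeasurable F →
    ∫ y, F y ∂(sphereMeasure 2) = c * ∫ θ in (-Real.pi)..Real.pi, F !₂[Real.cos θ, Real.sin θ] := by
  refine ⟨((((volume : Measure (Euc 2)).toSphere Set.univ)⁻¹ : ℝ≥0∞)).toReal, ?_, ?_⟩
  · apply ENNReal.toReal_pos
    · exact ENNReal.inv_ne_zero.2 (measure_ne_top _ _)
    · simp only [ne_eq, ENNReal.inv_eq_top, Measure.measure_univ_eq_zero]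
      exact Measure.toSphere_ne_zero _
  · intro F hF
    rw [sphereMeasure, integral_smul_measure, map_toSphere,
      integral_map gamma_cont.aemeasurable hF.aestronglyMeasurable,
      intervalIntegral.integral_of_le (by linarith [Real.pi_pos]), integral_Ioc_eq_integral_Ioo]
    simp

/-- (2π times) the Bessel function `J₀`. -/
def bJ (s : ℝ) : ℝ := ∫ θ in (-Real.pi)..Real.pi, Real.cos (s * Real.cos θ)

def bJ1 (s : ℝ) : ℝ := ∫ θ in (-Real.pi)..Real.pi, -(Real.cos θ * Real.sin (s * Real.cos θ))

def bJ2 (s : ℝ) : ℝ := ∫ θ in (-Real.pi)..Real.pi, -(Real.cos θ ^ 2 * Real.cos (s * Real.cos θ))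

lemma bJ_deriv (s : ℝ) : HasDerivAt bJ (bJ1 s) s := by
  refine (intervalIntegral.hasDerivAt_integral_of_dominated_loc_of_deriv_le
    (F := fun s θ => Real.cos (s * Real.cos θ))
    (F' := fun s θ => -(Real.cos θ * Real.sin (s * Real.cos θ))) (bound := fun _ => 1)
    Filter.univ_mem ?_ ?_ ?_ ?_ ?_ ?_).2
  · exact Filter.Eventually.of_forall fun x => Continuous.aestronglyMeasurable (by fun_prop)
  · exact Continuous.intervalIntegrable (by fun_prop) _ _
  · exact Continuous.aestronglyMeasurable (by fun_prop)
  · refine Filter.Eventually.of_forall fun θ _ x _ => ?_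
    rw [norm_neg, norm_mul]
    exact mul_le_one₀ (Real.abs_cos_le_one _) (norm_nonneg _) (Real.abs_sin_le_one _)
  · exact Continuous.intervalIntegrable (by fun_prop) _ _
  · refine Filter.Eventually.of_forall fun θ _ x _ => ?_
    have h := ((hasDerivAt_id x).mul_const (Real.cos θ)).cos
    refine h.congr_deriv ?_
    simp; ring

lemma bJ1_deriv (s : ℝ) : HasDerivAt bJ1 (bJ2 s) s := by
  refine (intervalIntegral.hasDerivAt_integral_of_dominated_loc_of_deriv_le
    (F := fun s θ => -(Real.cos θ * Real.sin (s * Real.cos θ)))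
    (F' := fun s θ => -(Real.cos θ ^ 2 * Real.cos (s * Real.cos θ))) (bound := fun _ => 1)
    Filter.univ_mem ?_ ?_ ?_ ?_ ?_ ?_).2
  · exact Filter.Eventually.of_forall fun x => Continuous.aestronglyMeasurable (by fun_prop)
  · exact Continuous.intervalIntegrable (by fun_prop) _ _
  · exact Continuous.aestronglyMeasurable (by fun_prop)
  · refine Filter.Eventually.of_forall fun θ _ x _ => ?_
    rw [norm_neg, norm_mul, norm_pow]
    exact mul_le_one₀ (pow_le_one₀ (norm_nonneg _) (Real.abs_cos_le_one _)) (norm_nonneg _)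
      (Real.abs_cos_le_one _)
  · exact Continuous.intervalIntegrable (by fun_prop) _ _
  · refine Filter.Eventually.of_forall fun θ _ x _ => ?_
    have h := (((hasDerivAt_id x).mul_const (Real.cos θ)).sin.const_mul (Real.cos θ)).neg
    refine h.congr_deriv ?_
    simp; ring

lemma bessel_ode (s : ℝ) : s * (bJ2 s + bJ s) + bJ1 s = 0 := by
  have h := intervalIntegral.integral_eq_sub_of_hasDerivAt (a := -Real.pi) (b := Real.pi)
    (f := fun θ => -(Real.sin θ * Real.sin (s * Real.cos θ)))
    (f' := fun θ => s * (-(Real.cos θ ^ 2 * Real.cos (s * Real.cos θ)) + Real.cos (s * Real.cos θ))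
      + -(Real.cos θ * Real.sin (s * Real.cos θ))) ?_ ?_
  · rw [intervalIntegral.integral_add, intervalIntegral.integral_const_mul,
      intervalIntegral.integral_add] at h
    · simpa [bJ, bJ1, bJ2] using h
    all_goals exact Continuous.intervalIntegrable (by fun_prop) _ _
  · intro θ _
    have h := ((Real.hasDerivAt_sin θ).mul ((Real.hasDerivAt_cos θ).const_mul s).sin).neg
    refine h.congr_deriv ?_
    have := Real.sin_sq_add_cos_sq θ
    linear_combination (Real.cos (s * Real.cos θ) * s) * this
  · exact Continuous.intervalIntegrable (by fun_prop) _ _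

lemma bJ_one_pos : 0 < bJ 1 := by
  refine intervalIntegral.intervalIntegral_pos_of_pos
    (Continuous.intervalIntegrable (by fun_prop) _ _) ?_ (by linarith [Real.pi_pos])
  intro θ
  have h1 := Real.neg_one_le_cos θ
  have h2 := Real.cos_le_one θ
  have := Real.pi_gt_three
  apply Real.cos_pos_of_mem_Ioo
  constructor <;> linarith

def bU (s : ℝ) : ℝ := √s * bJ s
def bV (s : ℝ) : ℝ := √s * bJ1 s + bJ s / (2 * √s)

lemma bU_deriv {s : ℝ} (hs : 0 < s) : HasDerivAt bU (bV s) s := by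
  have h := (Real.hasDerivAt_sqrt hs.ne').mul (bJ_deriv s)
  refine h.congr_deriv ?_
  simp only [bV]; ring

lemma bV_deriv {s : ℝ} (hs : 0 < s) : HasDerivAt bV (-(1 + 1 / (4 * s ^ 2)) * bU s) s := by
  have hq : 0 < √s := Real.sqrt_pos.2 hs
  have h := ((Real.hasDerivAt_sqrt hs.ne').mul (bJ1_deriv s)).add
    ((bJ_deriv s).div ((Real.hasDerivAt_sqrt hs.ne').const_mul 2) (by positivity))
  refine h.congr_deriv ?_
  have ho := bessel_ode s
  have e : s = √s ^ 2 := (Real.sq_sqrt hs.le).symm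
  simp only [bU]
  generalize bJ s = a at *
  generalize bJ1 s = b at *
  generalize bJ2 s = c at *
  generalize √s = w at *
  subst e
  field_simp
  linear_combination 16 * w ^ 2 * ho

lemma bE_deriv {s : ℝ} (hs : 0 < s) :
    HasDerivAt (fun s => bU s ^ 2 + bV s ^ 2) (-(bU s * bV s) / (2 * s ^ 2)) s := by
  have h := ((bU_deriv hs).pow 2).add ((bV_deriv hs).pow 2)
  refine h.congr_deriv ?_
  field_simp
  ring

lemma inv_deriv {s : ℝ} (hs : 0 < s) :
    HasDerivAt (fun s : ℝ => 1 / (4 * s)) (-(1 / (4 * s ^ 2))) s := by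
  have h := (((hasDerivAt_id s).const_mul 4)).inv (by simpa using hs.ne')
  simp only [one_div]
  refine h.congr_deriv ?_
  simp only [id]
  field_simp

lemma energy_lower : ∃ c, 0 < c ∧ ∀ s, 1 ≤ s → c ≤ bU s ^ 2 + bV s ^ 2 := by
  have hd : ∀ s : ℝ, 0 < s → HasDerivAt (fun s => (bU s ^ 2 + bV s ^ 2) * Real.exp (-(1 / (4 * s))))
      ((bU s - bV s) ^ 2 / (4 * s ^ 2) * Real.exp (-(1 / (4 * s)))) s := by
    intro s hs
    have h := (bE_deriv hs).mul (inv_deriv hs).neg.exp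
    refine h.congr_deriv ?_
    simp only [Pi.neg_apply]
    field_simp
    ring
  have hmono : MonotoneOn (fun s => (bU s ^ 2 + bV s ^ 2) * Real.exp (-(1 / (4 * s)))) (Ici 1) := by
    refine monotoneOn_of_hasDerivWithinAt_nonneg (convex_Ici 1)
      (f' := fun s => (bU s - bV s) ^ 2 / (4 * s ^ 2) * Real.exp (-(1 / (4 * s)))) ?_ ?_ ?_
    · intro s hs
      exact (hd s (lt_of_lt_of_le one_pos hs)).continuousAt.continuousWithinAt
    · intro s hs
      rw [interior_Ici] at hs
      exact (hd s (lt_trans one_pos hs)).hasDerivWithinAt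
    · intro s hs
      positivity
  refine ⟨(bU 1 ^ 2 + bV 1 ^ 2) * Real.exp (-(1 / (4 * 1))), ?_, fun s hs => ?_⟩
  · have : 0 < bU 1 := by simpa [bU] using bJ_one_pos
    positivity
  · refine (hmono (mem_Ici.2 le_rfl) (mem_Ici.2 hs) hs).trans ?_
    have : Real.exp (-(1 / (4 * s))) ≤ 1 := by
      rw [Real.exp_le_one_iff]
      have : 0 ≤ 1 / (4 * s) := by positivity
      linarith
    exact mul_le_of_le_one_right (by positivity) this

lemma energy_upper : ∃ C, 0 < C ∧ ∀ s, 1 ≤ s → bU s ^ 2 + bV s ^ 2 ≤ C := by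
  have hd : ∀ s : ℝ, 0 < s → HasDerivAt (fun s => (bU s ^ 2 + bV s ^ 2) * Real.exp (1 / (4 * s)))
      (-((bU s + bV s) ^ 2 / (4 * s ^ 2) * Real.exp (1 / (4 * s)))) s := by
    intro s hs
    have h := (bE_deriv hs).mul (inv_deriv hs).exp
    refine h.congr_deriv ?_
    field_simp
    ring
  have hmono : AntitoneOn (fun s => (bU s ^ 2 + bV s ^ 2) * Real.exp (1 / (4 * s))) (Ici 1) := by
    refine antitoneOn_of_hasDerivWithinAt_nonpos (convex_Ici 1)
      (f' := fun s => -((bU s + bV s) ^ 2 / (4 * s ^ 2) * Real.exp (1 / (4 * s)))) ?_ ?_ ?_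
    · intro s hs
      exact (hd s (lt_of_lt_of_le one_pos hs)).continuousAt.continuousWithinAt
    · intro s hs
      rw [interior_Ici] at hs
      exact (hd s (lt_trans one_pos hs)).hasDerivWithinAt
    · intro s hs
      have : 0 ≤ (bU s + bV s) ^ 2 / (4 * s ^ 2) * Real.exp (1 / (4 * s)) := by positivity
      linarith
  refine ⟨(bU 1 ^ 2 + bV 1 ^ 2) * Real.exp (1 / (4 * 1)), ?_, fun s hs => ?_⟩
  · have : 0 < bU 1 := by simpa [bU] using bJ_one_pos
    positivity
  · refine le_trans ?_ (hmono (mem_Ici.2 le_rfl) (mem_Ici.2 hs) hs)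
    have : 1 ≤ Real.exp (1 / (4 * s)) := by
      rw [Real.one_le_exp_iff]
      positivity
    exact le_mul_of_one_le_right (by positivity) this

lemma W_bound {K : ℝ} (hK : ∀ s, 1 ≤ s → |bU s| ≤ K) (φ : ℝ) {a s : ℝ} (ha : 1 ≤ a) (hs : a ≤ s) :
    |(bU s * Real.cos (s - φ) - bV s * Real.sin (s - φ)) -
      (bU a * Real.cos (a - φ) - bV a * Real.sin (a - φ))| ≤ K / (4 * a ^ 2) * (s - a) := by
  have hd : ∀ x ∈ Icc a s, HasDerivWithinAt
      (fun x => bU x * Real.cos (x - φ) - bV x * Real.sin (x - φ))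
      (bU x * Real.sin (x - φ) / (4 * x ^ 2)) (Icc a s) x := by
    intro x hx
    have hx0 : 0 < x := by linarith [hx.1]
    have hi := (hasDerivAt_id x).sub_const φ
    have h := ((bU_deriv hx0).mul hi.cos).sub ((bV_deriv hx0).mul hi.sin)
    refine (h.congr_deriv ?_).hasDerivWithinAt
    simp only [id]
    field_simp
    ring
  have h := (convex_Icc a s).norm_image_sub_le_of_norm_hasDerivWithin_le (C := K / (4 * a ^ 2))
    hd ?_ (left_mem_Icc.2 hs) (right_mem_Icc.2 hs)
  · simpa [Real.norm_eq_abs, abs_of_nonneg (sub_nonneg.2 hs)] using h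
  · intro x hx
    have hx1 : 1 ≤ x := ha.trans hx.1
    have hk := hK x hx1
    rw [Real.norm_eq_abs, abs_div, abs_mul, abs_of_pos (show 0 < 4 * x ^ 2 by positivity)]
    have hK0 : 0 ≤ K := (abs_nonneg _).trans hk
    have h1 : |bU x| * |Real.sin (x - φ)| ≤ K * 1 :=
      mul_le_mul hk (Real.abs_sin_le_one _) (abs_nonneg _) hK0
    rw [mul_one] at h1
    have h2 : a ^ 2 ≤ x ^ 2 := pow_le_pow_left₀ (by linarith) hx.1 2
    exact div_le_div₀ hK0 h1 (by positivity) (by linarith)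

lemma bU_main : ∃ c, 0 < c ∧ ∀ M : ℝ, ∃ l, M ≤ l ∧ 1 ≤ l ∧ ∃ ε : ℝ, |ε| = 1 ∧
    ∀ k : ℕ, k * Real.pi ≤ l → c ≤ ε * ((-1) ^ k * bU (l + k * Real.pi)) := by
  obtain ⟨c, hc, hlow⟩ := energy_lower
  obtain ⟨C, hC, hup⟩ := energy_upper
  obtain ⟨δ, hδ, hδc⟩ : ∃ δ, 0 < δ ∧ δ ^ 2 = c / 2 :=
    ⟨√(c / 2), by positivity, Real.sq_sqrt (by positivity)⟩
  set K := √C with hKdef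
  have hK0 : 0 < K := Real.sqrt_pos.2 hC
  have hK : ∀ s, 1 ≤ s → |bU s| ≤ K := fun s hs =>
    Real.abs_le_sqrt (by nlinarith [hup s hs, sq_nonneg (bV s)])
  refine ⟨δ / 4, by positivity, fun M => ?_⟩
  have hpi := Real.pi_pos
  have hpi4 := Real.pi_lt_four
  obtain ⟨l, hlM, hl1, hlK, hlu⟩ : ∃ l, M ≤ l ∧ 1 ≤ l ∧ K / δ ≤ l ∧ δ / 2 ≤ |bU l| := by
    set a := max M (max 1 (K / δ)) with ha
    have haM : M ≤ a := le_max_left _ _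
    have ha1 : 1 ≤ a := (le_max_left _ _).trans (le_max_right _ _)
    have haK : K / δ ≤ a := (le_max_right _ _).trans (le_max_right _ _)
    by_cases h : δ / 2 ≤ |bU a|
    · exact ⟨a, haM, ha1, haK, h⟩
    · refine ⟨a + Real.pi / 2, by linarith, by linarith, by linarith, ?_⟩
      push Not at h
      have hw := W_bound hK (a + Real.pi / 2) ha1 (show a ≤ a + Real.pi / 2 by linarith)
      have e1 : a - (a + Real.pi / 2) = -(Real.pi / 2) := by ring
      have e2 : a + Real.pi / 2 - a = Real.pi / 2 := by ring
      rw [e1, e2] at hw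
      simp only [sub_self, Real.cos_zero, Real.sin_zero, Real.cos_neg, Real.sin_neg,
        Real.cos_pi_div_two, Real.sin_pi_div_two] at hw
      have hKa : K ≤ a * δ := (div_le_iff₀ hδ).1 haK
      have hb : K / (4 * a ^ 2) * (Real.pi / 2) ≤ δ / 2 := by
        rw [div_mul_eq_mul_div, div_le_iff₀ (by positivity)]
        have h1 : K ≤ a ^ 2 * δ := by nlinarith
        nlinarith
      have hv : δ ≤ |bV a| := by
        refine le_of_sq_le_sq ?_ (abs_nonneg _)
        have := hlow a ha1
        have h3 : |bU a| ^ 2 ≤ (δ / 2) ^ 2 := pow_le_pow_left₀ (abs_nonneg _) h.le 2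
        rw [sq_abs] at h3
        rw [sq_abs]
        nlinarith
      have h4 : |bV a| - |bU (a + Real.pi / 2)| ≤ |bU (a + Real.pi / 2) - bV a| := by
        rw [abs_sub_comm]; exact abs_sub_abs_le_abs_sub _ _
      have h5 : |bU (a + Real.pi / 2) - bV a| ≤ δ / 2 := by
        refine le_trans (le_of_eq ?_) (hw.trans hb)
        congr 1; ring
      linarith
  have key : ∀ k : ℕ, k * Real.pi ≤ l → |(-1) ^ k * bU (l + k * Real.pi) - bU l| ≤ δ / 4 := by
    intro k hk
    have hk0 : 0 ≤ k * Real.pi := by positivity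
    have hw := W_bound hK l hl1 (show l ≤ l + k * Real.pi by linarith)
    have e : l + k * Real.pi - l = k * Real.pi := by ring
    rw [e, Real.cos_nat_mul_pi, Real.sin_nat_mul_pi] at hw
    simp only [sub_self, Real.cos_zero, Real.sin_zero, mul_zero, sub_zero, mul_one] at hw
    rw [mul_comm]
    refine hw.trans ?_
    have hKa : K ≤ l * δ := (div_le_iff₀ hδ).1 hlK
    rw [div_mul_eq_mul_div, div_le_iff₀ (by positivity)]
    have : K * (k * Real.pi) ≤ (l * δ) * l := mul_le_mul hKa hk hk0 (by positivity)
    nlinarith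
  refine ⟨l, hlM, hl1, ?_⟩
  rcases le_total 0 (bU l) with h | h
  · refine ⟨1, by simp, fun k hk => ?_⟩
    rw [abs_of_nonneg h] at hlu
    have := (abs_le.1 (key k hk)).1
    linarith
  · refine ⟨-1, by simp, fun k hk => ?_⟩
    rw [abs_of_nonpos h] at hlu
    have := (abs_le.1 (key k hk)).2
    linarith

/-- The test function: a truncated plane wave of frequency `l`. -/
def wave (l : ℝ) : Euc 2 → ℂ :=
  (ball (0 : Euc 2) 10).indicator (fun x => Complex.exp (((l * x 0 : ℝ) : ℂ) * Complex.I))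

lemma wave_meas (l : ℝ) : StronglyMeasurable (wave l) := by
  refine StronglyMeasurable.indicator (Continuous.stronglyMeasurable ?_) measurableSet_ball
  fun_prop

lemma wave_norm (l : ℝ) (x : Euc 2) :
    ‖wave l x‖ = ‖(ball (0 : Euc 2) 10).indicator (fun _ => (1 : ℂ)) x‖ := by
  unfold wave
  by_cases h : x ∈ ball (0 : Euc 2) 10
  · simp only [Set.indicator_of_mem h, Complex.norm_exp_ofReal_mul_I, norm_one]
  · simp only [Set.indicator_of_notMem h]

lemma avg_wave : ∃ c : ℝ, 0 < c ∧ ∀ (l : ℝ) (x : Euc 2), ‖x‖ < 1 → ∀ t₁ ∈ Icc (1:ℝ) 2,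
    ∀ t₂ ∈ Icc (1:ℝ) 2, c * |bJ (l * t₂) - bJ (l * t₁)| ≤
      ‖sphAvg (wave l) t₂ x - sphAvg (wave l) t₁ x‖ := by
  obtain ⟨c, hc, hsphere⟩ := int_sphere
  refine ⟨c, hc, fun l x hx => ?_⟩
  set G : ℝ → ℝ → ℂ := fun t θ => Complex.exp (((-(l * t * Real.cos θ) : ℝ) : ℂ) * Complex.I) with hG
  have hform : ∀ t ∈ Icc (1:ℝ) 2, sphAvg (wave l) t x =
      c * (Complex.exp (((l * x 0 : ℝ) : ℂ) * Complex.I) * ∫ θ in (-Real.pi)..Real.pi, G t θ) := by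
    intro t ht
    rw [sphAvg, hsphere (fun y => wave l (x - t • y)) ((wave_meas l).comp_measurable (by fun_prop))]
    congr 1
    rw [← intervalIntegral.integral_const_mul]
    apply intervalIntegral.integral_congr
    intro θ _
    have hn1 : ‖(!₂[Real.cos θ, Real.sin θ] : Euc 2)‖ = 1 := by
      simp [EuclideanSpace.norm_eq]
    have hmem : x - t • !₂[Real.cos θ, Real.sin θ] ∈ ball (0 : Euc 2) 10 := by
      rw [mem_ball_zero_iff]
      refine (norm_sub_le _ _).trans_lt ?_
      rw [norm_smul, hn1, Real.norm_of_nonneg (by linarith [ht.1])]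
      linarith [ht.2]
    simp only [wave, Set.indicator_of_mem hmem, hG]
    rw [← Complex.exp_add]
    congr 1
    rw [← add_mul, ← Complex.ofReal_add]
    congr 2
    simp
    ring
  have hre : ∀ t, (∫ θ in (-Real.pi)..Real.pi, G t θ).re = bJ (l * t) := by
    intro t
    have hi : IntervalIntegrable (G t) volume (-Real.pi) Real.pi :=
      Continuous.intervalIntegrable (by simp only [hG]; fun_prop) _ _
    have : ∫ θ in (-Real.pi)..Real.pi, (G t θ).re = (∫ θ in (-Real.pi)..Real.pi, G t θ).re :=
      Complex.reCLM.intervalIntegral_comp_comm hi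
    rw [← this, bJ]
    refine intervalIntegral.integral_congr (μ := volume) fun θ _ => ?_
    simp only [hG, Complex.exp_ofReal_mul_I_re, Real.cos_neg]
  intro t₁ h₁ t₂ h₂
  rw [hform t₁ h₁, hform t₂ h₂, ← mul_sub, ← mul_sub, norm_mul, norm_mul,
    Complex.norm_exp_ofReal_mul_I, one_mul, Complex.norm_real, Real.norm_of_nonneg hc.le]
  refine mul_le_mul_of_nonneg_left ?_ hc.le
  rw [← hre, ← hre, ← Complex.sub_re]
  exact Complex.abs_re_le_norm _

lemma bJ_diff {c l ε : ℝ} (hc : 0 < c) (hl : 1 ≤ l) (hε : |ε| = 1)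
    (h : ∀ k : ℕ, k * Real.pi ≤ l → c ≤ ε * ((-1) ^ k * bU (l + k * Real.pi)))
    (k : ℕ) (hk : ((k + 1 : ℕ) : ℝ) * Real.pi ≤ l) :
    c / √l ≤ |bJ (l + ((k + 1 : ℕ) : ℝ) * Real.pi) - bJ (l + k * Real.pi)| := by
  have hpi := Real.pi_pos
  have hk' : (k : ℝ) * Real.pi ≤ l := by
    refine le_trans ?_ hk
    push_cast
    nlinarith
  have gen : ∀ j : ℕ, (j : ℝ) * Real.pi ≤ l →
      c / (2 * √l) ≤ ε * ((-1) ^ j * bJ (l + j * Real.pi)) := by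
    intro j hj
    have hj0 : 0 ≤ (j : ℝ) * Real.pi := by positivity
    have hs : √(l + j * Real.pi) ≤ 2 * √l := by
      rw [Real.sqrt_le_left (by positivity), mul_pow, Real.sq_sqrt (by linarith)]
      linarith
    have hs0 : 0 < √(l + j * Real.pi) := Real.sqrt_pos.2 (by linarith)
    have h1 := h j hj
    rw [bU] at h1
    have h2 : c / √(l + j * Real.pi) ≤ ε * ((-1) ^ j * bJ (l + j * Real.pi)) := by
      rw [div_le_iff₀ hs0]
      linarith
    exact (div_le_div_of_nonneg_left hc.le hs0 hs).trans h2
  have h1 := gen k hk'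
  have h2 := gen (k + 1) hk
  have e : c / √l = c / (2 * √l) + c / (2 * √l) := by
    have : 0 < √l := Real.sqrt_pos.2 (by linarith)
    field_simp
    norm_num
  have e2 : |bJ (l + ((k + 1 : ℕ) : ℝ) * Real.pi) - bJ (l + k * Real.pi)| =
      |ε * (-1) ^ (k + 1) * (bJ (l + ((k + 1 : ℕ) : ℝ) * Real.pi) - bJ (l + k * Real.pi))| := by
    rw [abs_mul, abs_mul, hε]; simp
  rw [e, e2]
  refine le_trans ?_ (le_abs_self _)
  rw [pow_succ] at *
  linarith

lemma var_big (r : ℝ) (hr1 : 1 ≤ r) (hr2 : r < 2) (B : ℝ) : ∃ l : ℝ, ∀ x : Euc 2, ‖x‖ < 1 →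
    ENNReal.ofReal B ≤ VrIA r (wave l) x := by
  obtain ⟨c₁, hc₁, havg⟩ := avg_wave
  obtain ⟨c₂, hc₂, hU⟩ := bU_main
  have hr0 : 0 < r := by linarith
  have hexp : 0 < 1 / r - 1 / 2 := by
    rw [sub_pos]; exact one_div_lt_one_div_of_lt hr0 hr2

  set κ : ℝ := c₁ * c₂ * (1 / 8) ^ (1 / r) with hκ
  have hκ0 : 0 < κ := by positivity
  have hev : ∀ᶠ l : ℝ in Filter.atTop, B / κ ≤ l ^ (1 / r - 1 / 2) :=
    (tendsto_rpow_atTop hexp).eventually_ge_atTop _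
  obtain ⟨M, hM⟩ := Filter.eventually_atTop.1 hev
  obtain ⟨l, hlM, hl1, ε, hε, hk⟩ := hU (max M 8)
  refine ⟨l, fun x hx => ?_⟩
  have hl8 : 8 ≤ l := (le_max_right _ _).trans hlM
  have hB := hM l ((le_max_left _ _).trans hlM)
  have hl0 : 0 < l := by linarith
  have hpi := Real.pi_pos
  have hpi4 := Real.pi_lt_four
  set N := ⌊l / Real.pi⌋₊ with hN
  have hN1 : (N : ℝ) * Real.pi ≤ l :=
    (le_div_iff₀ hpi).1 (Nat.floor_le (by positivity))
  have hN2 : l / 8 ≤ N := by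
    have h1 : l / Real.pi < N + 1 := Nat.lt_floor_add_one _
    have h2 : l / 4 ≤ l / Real.pi := div_le_div_of_nonneg_left hl0.le hpi hpi4.le
    linarith
  have hle : ∀ k : ℕ, k ≤ N → (k : ℝ) * Real.pi ≤ l := fun k hkN => by
    have : (k : ℝ) ≤ N := by exact_mod_cast hkN
    nlinarith
  set b : ℝ := c₁ * (c₂ / √l) with hb
  have hb0 : 0 < b := by have := Real.sqrt_pos.2 hl0; positivity
  set t : Fin (N + 1) → ℝ := fun i => 1 + (i : ℕ) * Real.pi / l with ht
  have htm : StrictMono t := by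
    intro i j hij
    have : ((i : ℕ) : ℝ) < (j : ℕ) := by exact_mod_cast hij
    simp only [ht]
    gcongr
  have htI : ∀ i, t i ∈ Icc (1:ℝ) 2 := by
    intro i
    have h1 := hle i (Nat.lt_succ_iff.1 i.2)
    simp only [ht]
    constructor
    · have : 0 ≤ ((i : ℕ) : ℝ) * Real.pi / l := by positivity
      linarith
    · have : ((i : ℕ) : ℝ) * Real.pi / l ≤ 1 := by rwa [div_le_one hl0]
      linarith
  have hlt : ∀ i, l * t i = l + (i : ℕ) * Real.pi := by
    intro i; simp only [ht]; field_simp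
  have hterm : ∀ i : Fin N, ENNReal.ofReal b ^ r ≤
      (‖sphAvg (wave l) (t i.succ) x - sphAvg (wave l) (t i.castSucc) x‖₊ : ℝ≥0∞) ^ r := by
    intro i
    refine ENNReal.rpow_le_rpow ?_ hr0.le
    rw [← enorm_eq_nnnorm, ← ofReal_norm]
    refine ENNReal.ofReal_le_ofReal ?_
    refine le_trans ?_ (havg l x hx _ (htI i.castSucc) _ (htI i.succ))
    rw [hlt, hlt, Fin.val_succ, Fin.val_castSucc]
    exact mul_le_mul_of_nonneg_left (bJ_diff hc₂ hl1 hε hk i (hle _ i.2)) hc₁.le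
  have hsum : (N : ℝ≥0∞) * ENNReal.ofReal b ^ r ≤ ∑ i : Fin N,
      (‖sphAvg (wave l) (t i.succ) x - sphAvg (wave l) (t i.castSucc) x‖₊ : ℝ≥0∞) ^ r := by
    have := Finset.card_nsmul_le_sum Finset.univ _ _ fun i _ => hterm i
    simpa using this
  have hX : ENNReal.ofReal B ≤ ((N : ℝ≥0∞) * ENNReal.ofReal b ^ r) ^ (1 / r) := by
    rw [ENNReal.ofReal_rpow_of_pos hb0, ← ENNReal.ofReal_natCast, ← ENNReal.ofReal_mul (by positivity),
      ENNReal.ofReal_rpow_of_nonneg (by positivity) (by positivity)]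
    refine ENNReal.ofReal_le_ofReal ?_
    rw [Real.mul_rpow (by positivity) (by positivity), ← Real.rpow_mul hb0.le,
      mul_one_div_cancel hr0.ne', Real.rpow_one]
    have h1 : (l / 8) ^ (1 / r) ≤ (N : ℝ) ^ (1 / r) :=
      Real.rpow_le_rpow (by positivity) hN2 (by positivity)
    refine le_trans ?_ (mul_le_mul_of_nonneg_right h1 hb0.le)
    rw [div_le_iff₀ hκ0] at hB
    refine hB.trans (le_of_eq ?_)
    rw [hb, hκ, Real.rpow_sub hl0, ← Real.sqrt_eq_rpow, div_eq_mul_one_div l 8,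
      Real.mul_rpow hl0.le (by norm_num)]
    field_simp
  refine hX.trans ((ENNReal.rpow_le_rpow hsum (by positivity)).trans ?_)
  unfold VrIA rVar
  exact le_iSup_of_le N (le_iSup_of_le t (le_iSup_of_le htm (le_iSup_of_le htI le_rfl)))

lemma lqNorm_lower (q : ℝ≥0∞) (hq : 1 ≤ q) : ∃ m : ℝ≥0∞, m ≠ 0 ∧
    ∀ (g : Euc 2 → ℝ≥0∞) (B : ℝ≥0∞), (∀ x, ‖x‖ < 1 → B ≤ g x) → B * m ≤ lqNorm q g volume := by
  have hv : volume (ball (0 : Euc 2) 1) ≠ 0 := (measure_ball_pos _ _ one_pos).ne'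
  have hvt : volume (ball (0 : Euc 2) 1) ≠ ∞ := measure_ball_lt_top.ne
  by_cases hqt : q = ∞
  · refine ⟨1, one_ne_zero, fun g B h => ?_⟩
    rw [mul_one, lqNorm, if_pos hqt]
    by_contra hlt
    push Not at hlt
    have hae := ENNReal.ae_le_essSup (μ := (volume : Measure (Euc 2))) g
    refine hv (measure_mono_null ?_ hae)
    intro x hx hx2
    exact absurd ((h x (by simpa using hx)).trans hx2) (not_le.2 hlt)
  · have hq0 : 0 < q.toReal := ENNReal.toReal_pos (by positivity) hqt
    refine ⟨volume (ball (0 : Euc 2) 1) ^ (1 / q.toReal), ?_, fun g B h => ?_⟩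
    · exact (ENNReal.rpow_pos (pos_iff_ne_zero.2 hv) hvt).ne'
    · rw [lqNorm, if_neg hqt]
      have h1 : B ^ q.toReal * volume (ball (0 : Euc 2) 1) ≤ ∫⁻ x, g x ^ q.toReal := by
        rw [← setLIntegral_const]
        refine (setLIntegral_mono' measurableSet_ball fun x hx => ?_).trans
          (setLIntegral_le_lintegral (ball (0 : Euc 2) 1) _)
        exact ENNReal.rpow_le_rpow (h x (by simpa using hx)) hq0.le
      refine le_trans (le_of_eq ?_) (ENNReal.rpow_le_rpow h1 (by positivity))
      rw [ENNReal.mul_rpow_of_nonneg _ _ (by positivity), ← ENNReal.rpow_mul,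
        mul_one_div_cancel hq0.ne', ENNReal.rpow_one]

/-- Theorem 1.6 (iii): in two dimensions, for `1 ≤ r < 2` the operator `V_r^I A`
is not bounded from `L^p(ℝ²)` to `L^q(ℝ²)` for any exponents `1 ≤ p, q ≤ ∞`. -/
theorem local_variation_dim2_unbounded (r : ℝ) (hr1 : 1 ≤ r) (hr2 : r < 2)
    (p q : ℝ≥0∞) (hp : 1 ≤ p) (hq : 1 ≤ q) :
    ¬ IsBddLpLq 2 p q (VrIA r) := by
  rintro ⟨C, hC⟩
  obtain ⟨m, hm, hlow⟩ := lqNorm_lower q hq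
  set F : Euc 2 → ℂ := (ball (0 : Euc 2) 10).indicator (fun _ => (1 : ℂ)) with hF
  have hFm : MemLp F p volume :=
    memLp_indicator_const p measurableSet_ball 1 (Or.inr measure_ball_lt_top.ne)
  have hCF : (C : ℝ≥0∞) * eLpNorm F p volume ≠ ∞ :=
    ENNReal.mul_ne_top ENNReal.coe_ne_top hFm.eLpNorm_lt_top.ne
  have hbd : ∀ B : ℝ, ENNReal.ofReal B * m ≤ C * eLpNorm F p volume := by
    intro B
    obtain ⟨l, hl⟩ := var_big r hr1 hr2 B
    have hw : MemLp (wave l) p volume :=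
      hFm.of_le (wave_meas l).aestronglyMeasurable
        (Filter.Eventually.of_forall fun x => (wave_norm l x).le)
    have h := hC (wave l) hw
    have he : eLpNorm (wave l) p volume = eLpNorm F p volume :=
      eLpNorm_congr_norm_ae (Filter.Eventually.of_forall fun x => wave_norm l x)
    rw [he] at h
    exact (hlow _ _ hl).trans h
  set D := (C : ℝ≥0∞) * eLpNorm F p volume
  have hDm : D / m ≠ ∞ := ENNReal.div_ne_top hCF hm
  have h := hbd ((D / m).toReal + 1)
  have hmt : m ≠ ∞ := by
    rintro rfl
    rw [ENNReal.mul_top (by rw [ne_eq, ENNReal.ofReal_eq_zero, not_le]; positivity)] at h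
    exact hCF (top_le_iff.1 h)
  rw [← ENNReal.le_div_iff_mul_le (Or.inl hm) (Or.inl hmt), ENNReal.ofReal_add ENNReal.toReal_nonneg zero_le_one,
    ENNReal.ofReal_toReal hDm, ENNReal.ofReal_one] at h
  exact absurd h (not_le.2 (ENNReal.lt_add_right hDm one_ne_zero))
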